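/- Let α ∈ (1,2), let X be a real Banach space, let {T(t)}_{t>0} be a Riemann-Liouville α-order fractional cosine function on X, and let A be its generator. Then A is a closed linear operator and its domain D(A) is dense in X. -/

import Mathlib

/-!
Write `S(t) = ∫_0^t T`, `S₂(t) = ∫_0^t S`, `C(t) = J_t^{2-α} T(t)` (pointwise Bochner integrals, which
are bounded operators because `‖T(t)‖ ≤ M t^{α-2}` near `0` by uniform boundedness). The generator is
`Ax = lim Γ(α+1) t^{-α} (C(t)x - x)`, and `Γ(α+1) t^{-α} S₂(t)x → x` by integrating the asymptotics
of `T` twice (`tendsto_primS2`).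

The functional equation reads, up to the factor `Γ(2-α)`,
`S(t+s) = C(t)S(s) + S(t)C(s) - W(t,s)` with `W(t,s)` the integral of `(t+s-σ-τ)^{1-α} T(σ)T(τ)` over
`(0,t) × (0,s)`. Integrate it over `t`, integrate it over `s`, and subtract. With
`G(r) = r^{2-α}/(2-α)`, Fubini turns the two primitives of `W` into integrals with kernels
`G(t+s-σ-τ) - G(s-τ)` and `G(t+s-σ-τ) - G(t-σ)`; their difference `G(t-σ) - G(s-τ)` separates and
cancels against the primitives of `C(·)S(s)` and `S(t)C(·)`. What remains is `key_identity`: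
`(C(t) - I) S₂(s) = S₂(t) (C(s) - I)` for all `t, s > 0`.

Consequently `Ax = y` iff `C(t)x - x = S₂(t)y` for all `t > 0` (`genLimit_iff_forall`). These equations
are linear and closed in `(x, y)`. By the identity again, `S₂(s)z` lies in the domain of `A`, with image
`C(s)z - z`; since `Γ(α+1) s^{-α} S₂(s)x → x`, the domain is dense.
-/

open MeasureTheory Filter Topology Set

/-- Riemann-Liouville fractional integral of order `β` of `f` at `t`:
`J_t^β f(t) = (1/Γ(β)) ∫_0^t (t-σ)^{β-1} f(σ) dσ`. -/
noncomputable def RLint {X : Type*} [NormedAddCommGroup X] [NormedSpace ℝ X]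
    (β t : ℝ) (f : ℝ → X) : X :=
  (Real.Gamma β)⁻¹ • ∫ σ in (0:ℝ)..t, (t - σ) ^ (β - 1) • f σ

/-- `{T(t)}_{t>0}` is a Riemann-Liouville `α`-order fractional cosine function. -/
def IsRLFracCosine {X : Type*} [NormedAddCommGroup X] [NormedSpace ℝ X]
    (α : ℝ) (T : ℝ → X →L[ℝ] X) : Prop :=
  (∀ x : X, ContinuousOn (fun t => T t x) (Set.Ioi (0:ℝ))) ∧
  (∀ x : X, Tendsto (fun t : ℝ => t ^ (2 - α) • T t x) (𝓝[>] (0:ℝ))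
      (𝓝 ((Real.Gamma (α - 1))⁻¹ • x))) ∧
  (∀ x : X, ∀ t > (0:ℝ), ∀ s > (0:ℝ),
    Real.Gamma (2 - α) • (∫ σ in (0:ℝ)..(t + s), T σ x) =
      (∫ σ in (0:ℝ)..t, ∫ τ in (0:ℝ)..s, (t - σ) ^ (1 - α) • T σ (T τ x)) +
      (∫ σ in (0:ℝ)..t, ∫ τ in (0:ℝ)..s, (s - τ) ^ (1 - α) • T σ (T τ x)) -
      (∫ σ in (0:ℝ)..t, ∫ τ in (0:ℝ)..s, (t + s - σ - τ) ^ (1 - α) • T σ (T τ x)))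

/-- `GenLimit α T x y` says `x ∈ D(A)` with `Ax = y`, for the generator `A` of
`{T(t)}_{t>0}`:  `y = lim_{t→0+} Γ(α+1) t^{-α} J_t^{2-α}(T(t)x − (t^{α-2}/Γ(α-1)) x)`. -/
def GenLimit {X : Type*} [NormedAddCommGroup X] [NormedSpace ℝ X]
    (α : ℝ) (T : ℝ → X →L[ℝ] X) (x y : X) : Prop :=
  Tendsto (fun t : ℝ => (Real.Gamma (α + 1) * t ^ (-α)) •
      RLint (2 - α) t (fun r => T r x - (r ^ (α - 2) / Real.Gamma (α - 1)) • x))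
    (𝓝[>] (0:ℝ)) (𝓝 y)

/-! ### Scalar kernels -/

/-- The truncated power kernel `1_{a ≤ r} (r - a + b)^γ`. -/
noncomputable def truncKer (γ a b r : ℝ) : ℝ := if a ≤ r then (r - a + b) ^ γ else 0

lemma truncKer_integral {γ a b t : ℝ} (hγ : -1 < γ) (ha : 0 < a) (hat : a ≤ t) :
    IntegrableOn (truncKer γ a b) (Ioc 0 t) ∧
    ∫ r in Ioc 0 t, truncKer γ a b r = ((t - a + b) ^ (γ + 1) - b ^ (γ + 1)) / (γ + 1) := by
  have hind : truncKer γ a b = (Ici a).indicator (fun r => (r - a + b) ^ γ) := by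
    ext r; simp [truncKer, indicator]
  have hset : Ici a ∩ Ioc 0 t = Icc a t := by
    ext r; simp only [mem_inter_iff, mem_Ici, mem_Ioc, mem_Icc]
    constructor
    · rintro ⟨h1, h2, h3⟩; exact ⟨h1, h3⟩
    · rintro ⟨h1, h2⟩; exact ⟨h1, by linarith, h2⟩
  have hint : IntervalIntegrable (fun r : ℝ => (r - a + b) ^ γ) volume a t := by
    have h := (intervalIntegral.intervalIntegrable_rpow' (a := b) (b := t - a + b) hγ).comp_add_right
      (b - a)
    convert h using 2 <;> ring_nf
  have hon : IntegrableOn (fun r : ℝ => (r - a + b) ^ γ) (Icc a t) := by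
    rw [integrableOn_Icc_iff_integrableOn_Ioc]
    exact (intervalIntegrable_iff_integrableOn_Ioc_of_le hat).1 hint
  rw [hind]
  constructor
  · rw [IntegrableOn, integrable_indicator_iff measurableSet_Ici, IntegrableOn,
      Measure.restrict_restrict measurableSet_Ici, hset]
    exact hon
  · rw [integral_indicator measurableSet_Ici, Measure.restrict_restrict measurableSet_Ici, hset,
      integral_Icc_eq_integral_Ioc, ← intervalIntegral.integral_of_le hat]
    have : ∀ r, (r - a + b) ^ γ = (fun y : ℝ => y ^ γ) (r + (b - a)) := by
      intro r; simp only; congr 1; ring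
    simp_rw [this]
    rw [intervalIntegral.integral_comp_add_right (fun y : ℝ => y ^ γ), integral_rpow (Or.inl hγ)]
    congr 3 <;> ring_nf

lemma truncKer_nonneg {γ a b r : ℝ} (hb : 0 ≤ b) : 0 ≤ truncKer γ a b r := by
  unfold truncKer; split_ifs with h
  · exact Real.rpow_nonneg (by linarith) _
  · exact le_rfl

section swap

variable {X : Type*} [NormedAddCommGroup X] [NormedSpace ℝ X] [CompleteSpace X]
  {P : Type*} [MeasurableSpace P] {ν : Measure P} [SFinite ν]

lemma truncKer_measurable {a b : P → ℝ} (γ : ℝ) (ha : Measurable a) (hb : Measurable b) :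
    Measurable (fun q : ℝ × P => truncKer γ (a q.2) (b q.2) q.1) := by
  unfold truncKer
  exact Measurable.ite (measurableSet_le (by fun_prop) (by fun_prop)) (by fun_prop) (by fun_prop)

/-- Fubini for the truncated kernel against an integrable `u`; integrating out `r` produces a bounded
factor, so integrability on the product follows from that of `u` alone. -/
lemma truncKer_swap {γ t B : ℝ} (hγ : -1 < γ) {a b : P → ℝ}
    (ha : Measurable a) (hb : Measurable b)
    (hab : ∀ᵐ p ∂ν, 0 < a p ∧ a p ≤ t ∧ 0 ≤ b p ∧ b p ≤ B) {u : P → X} (hu : Integrable u ν) :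
    Integrable (fun q : ℝ × P => truncKer γ (a q.2) (b q.2) q.1 • u q.2)
      ((volume.restrict (Ioc 0 t)).prod ν) ∧
    Integrable (fun p => (((t - a p + b p) ^ (γ + 1) - b p ^ (γ + 1)) / (γ + 1)) • u p) ν ∧
    ∫ r in Ioc 0 t, ∫ p, truncKer γ (a p) (b p) r • u p ∂ν =
      ∫ p, (((t - a p + b p) ^ (γ + 1) - b p ^ (γ + 1)) / (γ + 1)) • u p ∂ν := by
  have hmeas : AEStronglyMeasurable (fun q : ℝ × P => truncKer γ (a q.2) (b q.2) q.1 • u q.2)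
      ((volume.restrict (Ioc 0 t)).prod ν) :=
    (truncKer_measurable γ ha hb).aestronglyMeasurable.smul hu.aestronglyMeasurable.comp_snd
  have hker : ∀ᵐ p ∂ν, ‖((t - a p + b p) ^ (γ + 1) - b p ^ (γ + 1)) / (γ + 1)‖
      ≤ (t + B) ^ (γ + 1) / (γ + 1) := by
    filter_upwards [hab] with p hp
    obtain ⟨h1, h2, h3, h4⟩ := hp
    have e1 : b p ^ (γ + 1) ≤ (t - a p + b p) ^ (γ + 1) :=
      Real.rpow_le_rpow h3 (by linarith) (by linarith)
    have e2 : (t - a p + b p) ^ (γ + 1) ≤ (t + B) ^ (γ + 1) :=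
      Real.rpow_le_rpow (by linarith) (by linarith) (by linarith)
    have e3 : 0 ≤ b p ^ (γ + 1) := Real.rpow_nonneg h3 _
    rw [Real.norm_of_nonneg (div_nonneg (by linarith) (by linarith))]
    exact div_le_div_of_nonneg_right (by linarith) (by linarith)
  have hkm : AEStronglyMeasurable
      (fun p => ((t - a p + b p) ^ (γ + 1) - b p ^ (γ + 1)) / (γ + 1)) ν :=
    Measurable.aestronglyMeasurable (by fun_prop)
  have hI : Integrable (fun q : ℝ × P => truncKer γ (a q.2) (b q.2) q.1 • u q.2)
      ((volume.restrict (Ioc 0 t)).prod ν) := by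
    rw [integrable_prod_iff' hmeas]
    constructor
    · filter_upwards [hab] with p hp
      exact (truncKer_integral hγ hp.1 hp.2.1).1.smul_const _
    · have h := (hu.norm.bdd_mul hkm hker)
      refine h.congr ?_
      filter_upwards [hab] with p hp
      simp only [norm_smul, Real.norm_of_nonneg (truncKer_nonneg hp.2.2.1)]
      rw [integral_mul_const, (truncKer_integral hγ hp.1 hp.2.1).2]
  refine ⟨hI, hu.bdd_smul _ hkm hker, ?_⟩
  rw [integral_integral_swap hI]
  refine integral_congr_ae ?_
  filter_upwards [hab] with p hp
  rw [integral_smul_const, (truncKer_integral hγ hp.1 hp.2.1).2]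

end swap

/-- Euler's Beta integral `B(2-α, α-1)`, rescaled to `(0,t)`. -/
lemma beta_int {α t : ℝ} (hα : α ∈ Ioo (1:ℝ) 2) (ht : 0 < t) :
    IntervalIntegrable (fun σ : ℝ => (t - σ) ^ (1 - α) * σ ^ (α - 2)) volume 0 t ∧
    ∫ σ in (0:ℝ)..t, (t - σ) ^ (1 - α) * σ ^ (α - 2) =
      Real.Gamma (2 - α) * Real.Gamma (α - 1) := by
  obtain ⟨h1, h2⟩ := hα
  have hval : ∫ σ in (0:ℝ)..t, (t - σ) ^ (1 - α) * σ ^ (α - 2) =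
      Real.Gamma (2 - α) * Real.Gamma (α - 1) := by
    have h := Complex.betaIntegral_scaled ((α - 1 : ℝ) : ℂ) ((2 - α : ℝ) : ℂ) ht
    rw [Complex.betaIntegral_eq_Gamma_mul_div _ _ (by simpa using h1) (by simpa using h2)] at h
    rw [← Complex.ofReal_inj, ← intervalIntegral.integral_ofReal]
    rw [show ((α - 1 : ℝ) : ℂ) + ((2 - α : ℝ) : ℂ) = 1 by push_cast; ring] at h
    simp only [Complex.Gamma_one, div_one, sub_self, Complex.cpow_zero, one_mul] at h
    rw [Complex.Gamma_ofReal, Complex.Gamma_ofReal] at h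
    push_cast
    rw [mul_comm, ← h]
    refine intervalIntegral.integral_congr ?_
    intro σ hσ
    rw [uIcc_of_le ht.le] at hσ
    simp only
    rw [Complex.ofReal_cpow (by linarith [hσ.2]), Complex.ofReal_cpow hσ.1,
      mul_comm]
    push_cast
    ring_nf
  refine ⟨?_, hval⟩
  -- a non-integrable function would have integral `0`, but the value is positive
  by_contra hni
  have := intervalIntegral.integral_undef hni
  rw [hval] at this
  have e1 := Real.Gamma_pos_of_pos (show 0 < 2 - α by linarith)
  have e2 := Real.Gamma_pos_of_pos (show 0 < α - 1 by linarith)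
  exact (mul_pos e1 e2).ne' this

/-! ### Vector-valued primitives and operator-valued integrals -/

section limits

variable {X : Type*} [NormedAddCommGroup X] [NormedSpace ℝ X]

lemma setIntegral_ite_le {r t : ℝ} (hr : r ∈ Ioc 0 t) (F : ℝ → X) :
    ∫ σ in Ioc 0 t, (if σ ≤ r then F σ else 0) = ∫ σ in (0:ℝ)..r, F σ := by
  have hind : (fun σ => if σ ≤ r then F σ else 0) = (Iic r).indicator F := by
    ext σ; simp [indicator]
  have hset : Iic r ∩ Ioc 0 t = Ioc 0 r := by
    ext σ; simp only [mem_inter_iff, mem_Iic, mem_Ioc]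
    constructor
    · rintro ⟨h1, h2, h3⟩; exact ⟨h2, h1⟩
    · rintro ⟨h1, h2⟩; exact ⟨h2, h1, h2.trans hr.2⟩
  rw [hind, integral_indicator measurableSet_Iic, Measure.restrict_restrict measurableSet_Iic,
    hset, intervalIntegral.integral_of_le hr.1.le]

/-- If `f(t) ~ t^γ z` as `t → 0+`, then `∫_0^t f ~ t^{γ+1}/(γ+1) z`. -/
lemma tendsto_primitive [CompleteSpace X] {γ : ℝ} (hγ : -1 < γ) {f : ℝ → X} {z : X}
    (hint : ∀ t > 0, IntervalIntegrable f volume 0 t)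
    (hf : Tendsto (fun t : ℝ => t ^ (-γ) • f t) (𝓝[>] 0) (𝓝 z)) :
    Tendsto (fun t : ℝ => t ^ (-(γ + 1)) • ∫ σ in (0:ℝ)..t, f σ) (𝓝[>] 0)
      (𝓝 ((γ + 1)⁻¹ • z)) := by
  have hγ' : 0 < γ + 1 := by linarith
  rw [Metric.tendsto_nhds] at hf ⊢
  intro ε hε
  have h1 := hf (ε * (γ + 1) / 2) (by positivity)
  rw [eventually_nhdsWithin_iff, Metric.eventually_nhds_iff] at h1
  obtain ⟨δ, hδ, h1⟩ := h1
  have hmem : Ioo (0:ℝ) δ ∈ 𝓝[>] (0:ℝ) := Ioo_mem_nhdsGT hδ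
  filter_upwards [hmem] with t ht
  have hpow : ∫ σ in (0:ℝ)..t, σ ^ γ = t ^ (γ + 1) / (γ + 1) := by
    rw [integral_rpow (Or.inl hγ), Real.zero_rpow hγ'.ne', sub_zero]
  have hpi : IntervalIntegrable (fun σ : ℝ => σ ^ γ) volume 0 t :=
    intervalIntegral.intervalIntegrable_rpow' hγ
  have hpt : ∀ σ ∈ Ioc 0 t, ‖f σ - σ ^ γ • z‖ ≤ (ε * (γ + 1) / 2) * σ ^ γ := by
    intro σ hσ
    have h2 := h1 (y := σ) (by rw [Real.dist_eq, sub_zero, abs_of_pos hσ.1]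
                               exact lt_of_le_of_lt hσ.2 ht.2) hσ.1
    have hp : 0 < σ ^ γ := Real.rpow_pos_of_pos hσ.1 _
    have h3 : f σ - σ ^ γ • z = σ ^ γ • (σ ^ (-γ) • f σ - z) := by
      rw [smul_sub, smul_smul, ← Real.rpow_add hσ.1]; simp
    rw [h3, norm_smul, Real.norm_of_nonneg hp.le, mul_comm]
    rw [dist_eq_norm] at h2
    exact mul_le_mul_of_nonneg_right h2.le hp.le
  have h4 : ‖∫ σ in (0:ℝ)..t, (f σ - σ ^ γ • z)‖ ≤ ∫ σ in (0:ℝ)..t, (ε * (γ + 1) / 2) * σ ^ γ :=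
    intervalIntegral.norm_integral_le_of_norm_le ht.1.le (Eventually.of_forall hpt)
      (hpi.const_mul _)
  rw [intervalIntegral.integral_const_mul, hpow, intervalIntegral.integral_sub (hint t ht.1)
    ⟨hpi.1.smul_const z, hpi.2.smul_const z⟩, intervalIntegral.integral_smul_const, hpow] at h4
  have htp : 0 < t ^ (γ + 1) := Real.rpow_pos_of_pos ht.1 _
  rw [dist_eq_norm]
  have h5 : t ^ (-(γ + 1)) • (∫ σ in (0:ℝ)..t, f σ) - (γ + 1)⁻¹ • z =
      t ^ (-(γ + 1)) • ((∫ σ in (0:ℝ)..t, f σ) - (t ^ (γ + 1) / (γ + 1)) • z) := by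
    rw [smul_sub, smul_smul, Real.rpow_neg ht.1.le]
    congr 2
    field_simp
  rw [h5, norm_smul, Real.norm_of_nonneg (Real.rpow_nonneg ht.1.le _), Real.rpow_neg ht.1.le]
  calc _ ≤ (t ^ (γ + 1))⁻¹ * (ε * (γ + 1) / 2 * (t ^ (γ + 1) / (γ + 1))) := by gcongr
    _ = ε / 2 := by field_simp
    _ < ε := by linarith

/-- Pointwise Bochner integrals of a strongly measurable operator family with integrable norm
bound define a bounded operator. -/
lemma exists_clm_integral {V : ℝ → X →L[ℝ] X} {t : ℝ} {k : ℝ → ℝ} (ht : 0 < t)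
    (hk : IntegrableOn k (Ioc 0 t))
    (hV : ∀ x, AEStronglyMeasurable (fun σ => V σ x) (volume.restrict (Ioc 0 t)))
    (hb : ∀ σ ∈ Ioc 0 t, ‖V σ‖ ≤ k σ) :
    (∀ x, IntervalIntegrable (fun σ => V σ x) volume 0 t) ∧
    ∃ L : X →L[ℝ] X, ∀ x, L x = ∫ σ in (0:ℝ)..t, V σ x := by
  have hle : ∀ x, ∀ σ ∈ Ioc 0 t, ‖V σ x‖ ≤ k σ * ‖x‖ := fun x σ hσ =>
    (V σ).le_of_opNorm_le (hb σ hσ) x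
  have hI : ∀ x, IntervalIntegrable (fun σ => V σ x) volume 0 t := by
    intro x
    rw [intervalIntegrable_iff_integrableOn_Ioc_of_le ht.le]
    refine Integrable.mono' (hk.mul_const ‖x‖) (hV x) ?_
    exact (ae_restrict_iff' measurableSet_Ioc).2 (Eventually.of_forall (hle x))
  refine ⟨hI, LinearMap.mkContinuous
    { toFun := fun x => ∫ σ in (0:ℝ)..t, V σ x
      map_add' := ?_
      map_smul' := ?_ } (∫ σ in (0:ℝ)..t, k σ) ?_, fun x => rfl⟩
  · intro x y
    simp only [map_add]
    exact intervalIntegral.integral_add (hI x) (hI y)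
  · intro c x
    simp only [map_smul, RingHom.id_apply]
    exact intervalIntegral.integral_smul c _
  · intro x
    simp only [LinearMap.coe_mk, AddHom.coe_mk]
    rw [← intervalIntegral.integral_mul_const]
    refine intervalIntegral.norm_integral_le_of_norm_le ht.le (Eventually.of_forall (hle x)) ?_
    exact ((intervalIntegrable_iff_integrableOn_Ioc_of_le ht.le).2 hk).mul_const _

lemma T_meas {α : ℝ} {T : ℝ → X →L[ℝ] X} (hT : IsRLFracCosine α T) (t : ℝ) (x : X) :
    AEStronglyMeasurable (fun σ => T σ x) (volume.restrict (Ioc 0 t)) :=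
  ((hT.1 x).mono Ioc_subset_Ioi_self).aestronglyMeasurable measurableSet_Ioc

end limits

/-! ### Bounds for the family `T` -/

section cosine

variable {X : Type*} [NormedAddCommGroup X] [NormedSpace ℝ X] [CompleteSpace X]
  {α : ℝ} {T : ℝ → X →L[ℝ] X}

/-- Uniform boundedness applied to `t^{2-α} T(t)`, whose orbits extend continuously to `[0,b]`. -/
lemma T_bound (hT : IsRLFracCosine α T) (b : ℝ) :
    ∃ M : ℝ, 0 ≤ M ∧ ∀ t ∈ Ioc 0 b, ‖T t‖ ≤ M * t ^ (α - 2) := by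
  obtain ⟨hc, hl, -⟩ := hT
  have hpt : ∀ x, ∃ K, ∀ i : Ioc (0:ℝ) b, ‖((i:ℝ) ^ (2 - α) • T i) x‖ ≤ K := by
    intro x
    set φ : ℝ → X := Function.update (fun t : ℝ => t ^ (2 - α) • T t x) 0
      ((Real.Gamma (α - 1))⁻¹ • x) with hφ
    have hφc : ContinuousOn φ (Icc 0 b) := by
      rw [hφ, continuousOn_update_iff]
      constructor
      · have : Icc 0 b \ {0} ⊆ Ioi (0:ℝ) := by
          rintro t ⟨⟨h1, h2⟩, h3⟩
          exact lt_of_le_of_ne h1 (Ne.symm h3)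
        refine ContinuousOn.mono ?_ this
        exact (continuousOn_id.rpow_const (fun t ht => Or.inl (ne_of_gt ht))).smul (hc x)
      · intro _
        refine (hl x).mono_left (nhdsWithin_mono _ ?_)
        rintro t ⟨⟨h1, h2⟩, h3⟩
        exact lt_of_le_of_ne h1 (Ne.symm h3)
    obtain ⟨K, hK⟩ := isCompact_Icc.exists_bound_of_continuousOn hφc
    refine ⟨K, fun i => ?_⟩
    have := hK i ⟨i.2.1.le, i.2.2⟩
    rwa [hφ, Function.update_of_ne (ne_of_gt i.2.1)] at this
  obtain ⟨M, hM⟩ := banach_steinhaus hpt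
  refine ⟨max M 0, le_max_right _ _, fun t ht => ?_⟩
  have h := hM ⟨t, ht⟩
  have hp : 0 < t ^ (2 - α) := Real.rpow_pos_of_pos ht.1 _
  rw [norm_smul, Real.norm_of_nonneg hp.le] at h
  have e : t ^ (α - 2) = (t ^ (2 - α))⁻¹ := by
    rw [← Real.rpow_neg ht.1.le]; congr 1; ring
  rw [e, ← div_eq_mul_inv, le_div_iff₀ hp, mul_comm]
  exact h.trans (le_max_left _ _)

/-- Joint continuity of the double orbit: strong continuity plus local boundedness. -/
lemma T_joint_cont (hT : IsRLFracCosine α T) (x : X) :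
    ContinuousOn (fun p : ℝ × ℝ => T p.1 (T p.2 x)) (Ioi 0 ×ˢ Ioi 0) := by
  rintro ⟨σ₀, τ₀⟩ ⟨hσ, hτ⟩
  simp only [mem_Ioi] at hσ hτ
  obtain ⟨M, hM0, hM⟩ := T_bound hT (σ₀ + 1)
  have hopen : Ioi (0:ℝ) ×ˢ Ioi (0:ℝ) ∈ 𝓝 (σ₀, τ₀) :=
    (isOpen_Ioi.prod isOpen_Ioi).mem_nhds ⟨hσ, hτ⟩
  apply ContinuousAt.continuousWithinAt
  have hc1 : ContinuousAt (fun p : ℝ × ℝ => T p.1 (T τ₀ x)) (σ₀, τ₀) :=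
    ContinuousAt.comp (f := Prod.fst) (g := fun σ => T σ (T τ₀ x)) (x := (σ₀, τ₀))
      ((hT.1 (T τ₀ x)).continuousAt (isOpen_Ioi.mem_nhds hσ)) continuousAt_fst
  have hc2 : ContinuousAt (fun p : ℝ × ℝ => T p.2 x) (σ₀, τ₀) :=
    ContinuousAt.comp (f := Prod.snd) (g := fun σ => T σ x) (x := (σ₀, τ₀))
      ((hT.1 x).continuousAt (isOpen_Ioi.mem_nhds hτ)) continuousAt_snd
  have hc3 : ContinuousAt (fun p : ℝ × ℝ => M * p.1 ^ (α - 2)) (σ₀, τ₀) :=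
    continuousAt_const.mul (continuousAt_fst.rpow_const (Or.inl hσ.ne'))
  have h0 : Tendsto (fun p : ℝ × ℝ => T p.1 (T p.2 x - T τ₀ x)) (𝓝 (σ₀, τ₀)) (𝓝 0) := by
    have hz : Tendsto (fun p : ℝ × ℝ => M * p.1 ^ (α - 2) * ‖T p.2 x - T τ₀ x‖)
        (𝓝 (σ₀, τ₀)) (𝓝 0) := by
      have := hc3.tendsto.mul (hc2.tendsto.sub_const (T τ₀ x)).norm
      simpa using this
    refine squeeze_zero_norm' ?_ hz
    have hn : Ioc (0:ℝ) (σ₀ + 1) ×ˢ (univ : Set ℝ) ∈ 𝓝 (σ₀, τ₀) :=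
      prod_mem_nhds (Ioc_mem_nhds hσ (by linarith)) univ_mem
    filter_upwards [hn] with p hp
    exact (T p.1).le_of_opNorm_le (hM p.1 hp.1) _
  have := h0.add hc1.tendsto
  simp only [map_sub, sub_add_cancel, zero_add] at this
  exact this

/-! ### Primitives of `T` and the mixed term -/

/-- The first primitive `S(t)x = ∫_0^t T(σ)x dσ`. -/
noncomputable def primS (T : ℝ → X →L[ℝ] X) (t : ℝ) (x : X) : X := ∫ σ in (0:ℝ)..t, T σ x

/-- The second primitive `∫_0^t S(r)x dr`. -/
noncomputable def primS2 (T : ℝ → X →L[ℝ] X) (t : ℝ) (x : X) : X :=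
  ∫ r in (0:ℝ)..t, primS T r x

/-- The unnormalised fractional integral `Γ(2-α) J_t^{2-α} T(t)x`. -/
noncomputable def fracC (α : ℝ) (T : ℝ → X →L[ℝ] X) (t : ℝ) (x : X) : X :=
  ∫ σ in (0:ℝ)..t, (t - σ) ^ (1 - α) • T σ x

lemma primS_clm (hT : IsRLFracCosine α T) (hα : α ∈ Ioo (1:ℝ) 2) {t : ℝ} (ht : 0 < t) :
    (∀ x, IntervalIntegrable (fun σ => T σ x) volume 0 t) ∧
    ∃ L : X →L[ℝ] X, ∀ x, L x = primS T t x := by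
  obtain ⟨M, hM0, hM⟩ := T_bound hT t
  refine exists_clm_integral ht (k := fun σ => M * σ ^ (α - 2)) ?_ (T_meas hT t) hM
  refine Integrable.const_mul ?_ M
  exact (intervalIntegrable_iff_integrableOn_Ioc_of_le ht.le).1
    (intervalIntegral.intervalIntegrable_rpow' (by linarith [hα.1]))

lemma fracC_clm (hT : IsRLFracCosine α T) (hα : α ∈ Ioo (1:ℝ) 2) {t : ℝ} (ht : 0 < t) :
    (∀ x, IntervalIntegrable (fun σ => (t - σ) ^ (1 - α) • T σ x) volume 0 t) ∧
    ∃ L : X →L[ℝ] X, ∀ x, L x = fracC α T t x := by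
  obtain ⟨M, hM0, hM⟩ := T_bound hT t
  refine exists_clm_integral (V := fun σ => (t - σ) ^ (1 - α) • T σ) ht
    (k := fun σ => M * ((t - σ) ^ (1 - α) * σ ^ (α - 2))) ?_ ?_ ?_
  · refine Integrable.const_mul ?_ M
    exact (intervalIntegrable_iff_integrableOn_Ioc_of_le ht.le).1 (beta_int hα ht).1
  · intro x
    have : Measurable fun σ : ℝ => (t - σ) ^ (1 - α) := by fun_prop
    exact this.aestronglyMeasurable.smul (T_meas hT t x)
  · intro σ hσ
    have h0 : 0 ≤ (t - σ) ^ (1 - α) := Real.rpow_nonneg (by linarith [hσ.2]) _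
    rw [norm_smul, Real.norm_of_nonneg h0]
    calc _ ≤ (t - σ) ^ (1 - α) * (M * σ ^ (α - 2)) := by gcongr; exact hM σ hσ
      _ = _ := by ring

lemma primS_cont (hT : IsRLFracCosine α T) (hα : α ∈ Ioo (1:ℝ) 2) {t : ℝ} (ht : 0 < t) (x : X) :
    ContinuousOn (fun r => primS T r x) (Icc 0 t) := by
  have := intervalIntegral.continuousOn_primitive_interval' ((primS_clm hT hα ht).1 x)
    left_mem_uIcc
  rwa [uIcc_of_le ht.le] at this

lemma primS2_clm (hT : IsRLFracCosine α T) (hα : α ∈ Ioo (1:ℝ) 2) {t : ℝ} (ht : 0 < t) :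
    (∀ x, IntervalIntegrable (fun r => primS T r x) volume 0 t) ∧
    ∃ L : X →L[ℝ] X, ∀ x, L x = primS2 T t x := by
  have hex : ∀ r, ∃ L : X →L[ℝ] X, 0 < r → ∀ x, L x = primS T r x := by
    intro r
    by_cases hr : 0 < r
    · obtain ⟨L, hL⟩ := (primS_clm hT hα hr).2
      exact ⟨L, fun _ => hL⟩
    · exact ⟨0, fun h => absurd h hr⟩
  choose S hS using hex
  obtain ⟨K, hK⟩ : ∃ K, ∀ i : Ioc (0:ℝ) t, ‖S i‖ ≤ K := by
    apply banach_steinhaus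
    intro x
    obtain ⟨K, hK⟩ := isCompact_Icc.exists_bound_of_continuousOn (primS_cont hT hα ht x)
    exact ⟨K, fun i => by rw [hS i i.2.1]; exact hK i ⟨i.2.1.le, i.2.2⟩⟩
  obtain ⟨h1, L, hL⟩ := exists_clm_integral (V := S) ht (k := fun _ => K)
    (integrableOn_const (by simp)) (fun x => by
      refine AEStronglyMeasurable.congr (((primS_cont hT hα ht x).mono
        Ioc_subset_Icc_self).aestronglyMeasurable measurableSet_Ioc) ?_
      filter_upwards [ae_restrict_mem measurableSet_Ioc] with r hr
      rw [hS r hr.1]) (fun r hr => hK ⟨r, hr⟩)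
  refine ⟨fun x => ?_, L, fun x => ?_⟩
  · exact (primS_cont hT hα ht x).intervalIntegrable_of_Icc ht.le
  · rw [hL, primS2]
    refine intervalIntegral.integral_congr_ae (Eventually.of_forall fun r hr => ?_)
    rw [uIoc_of_le ht.le] at hr
    rw [hS r hr.1]

lemma T_joint_int (hT : IsRLFracCosine α T) (hα : α ∈ Ioo (1:ℝ) 2) {t s : ℝ} (ht : 0 < t)
    (hs : 0 < s) (x : X) :
    IntegrableOn (fun p : ℝ × ℝ => T p.1 (T p.2 x)) (Ioc 0 t ×ˢ Ioc 0 s) := by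
  obtain ⟨M, hM0, hM⟩ := T_bound hT t
  obtain ⟨N, hN0, hN⟩ := T_bound hT s
  have hp : ∀ {b c : ℝ}, 0 < b → IntegrableOn (fun σ : ℝ => c * σ ^ (α - 2)) (Ioc 0 b) := by
    intro b c hb
    refine Integrable.const_mul ?_ c
    exact (intervalIntegrable_iff_integrableOn_Ioc_of_le hb.le).1
      (intervalIntegral.intervalIntegrable_rpow' (by linarith [hα.1]))
  have hd : IntegrableOn (fun p : ℝ × ℝ => (M * p.1 ^ (α - 2)) * (N * ‖x‖ * p.2 ^ (α - 2)))
      (Ioc 0 t ×ˢ Ioc 0 s) := by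
    rw [IntegrableOn, Measure.volume_eq_prod, ← Measure.prod_restrict]
    exact Integrable.mul_prod (hp ht) (hp hs)
  have hms : MeasurableSet (Ioc (0:ℝ) t ×ˢ Ioc (0:ℝ) s) :=
    measurableSet_Ioc.prod measurableSet_Ioc
  refine Integrable.mono' hd (((T_joint_cont hT x).mono (prod_mono Ioc_subset_Ioi_self
    Ioc_subset_Ioi_self)).aestronglyMeasurable hms) ?_
  filter_upwards [ae_restrict_mem hms] with p hp
  have h1 := (T p.2).le_of_opNorm_le (hN _ hp.2) x
  have h2 := (T p.1).le_of_opNorm_le (hM _ hp.1) (T p.2 x)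
  have h3 : 0 ≤ M * p.1 ^ (α - 2) := mul_nonneg hM0 (Real.rpow_nonneg hp.1.1.le _)
  calc _ ≤ M * p.1 ^ (α - 2) * ‖T p.2 x‖ := h2
    _ ≤ M * p.1 ^ (α - 2) * (N * p.2 ^ (α - 2) * ‖x‖) := by gcongr
    _ = _ := by ring

/-- The kernel `G(r) = r^{2-α}/(2-α)`, primitive of `r^{1-α}`. -/
noncomputable def kerG (α r : ℝ) : ℝ := r ^ (1 - α + 1) / (1 - α + 1)

/-- `∫_0^t Γ(2-α) J_r^{2-α} T(r)x dr = ∫_0^t G(t-σ) T(σ)x dσ`. -/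
lemma int_fracC (hT : IsRLFracCosine α T) (hα : α ∈ Ioo (1:ℝ) 2) {t : ℝ} (ht : 0 < t) (x : X) :
    IntervalIntegrable (fun r => fracC α T r x) volume 0 t ∧
    IntervalIntegrable (fun σ => kerG α (t - σ) • T σ x) volume 0 t ∧
    ∫ r in (0:ℝ)..t, fracC α T r x = ∫ σ in (0:ℝ)..t, kerG α (t - σ) • T σ x := by
  have hu := (intervalIntegrable_iff_integrableOn_Ioc_of_le ht.le).1 ((primS_clm hT hα ht).1 x)
  obtain ⟨h1, h2, h3⟩ := truncKer_swap (γ := 1 - α) (t := t) (B := 0) (a := fun σ : ℝ => σ)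
    (b := fun _ => 0) (by linarith [hα.2]) measurable_id measurable_const
    (by filter_upwards [ae_restrict_mem measurableSet_Ioc] with p hp
        exact ⟨hp.1, hp.2, le_rfl, le_rfl⟩) hu
  have hG : ∀ σ, ((t - σ + 0) ^ (1 - α + 1) - (0:ℝ) ^ (1 - α + 1)) / (1 - α + 1)
      = kerG α (t - σ) := by
    intro σ
    rw [Real.zero_rpow (by linarith [hα.2]), sub_zero, add_zero, kerG]
  simp only [hG] at h2 h3
  have hC : ∀ r ∈ Ioc 0 t, ∫ σ in Ioc 0 t, truncKer (1 - α) σ 0 r • T σ x = fracC α T r x := by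
    intro r hr
    rw [fracC, ← setIntegral_ite_le hr]
    refine integral_congr_ae (Eventually.of_forall fun σ => ?_)
    simp only [truncKer, ite_smul, zero_smul, add_zero]
  refine ⟨?_, (intervalIntegrable_iff_integrableOn_Ioc_of_le ht.le).2 h2, ?_⟩
  · rw [intervalIntegrable_iff_integrableOn_Ioc_of_le ht.le]
    refine h1.integral_prod_left.congr ?_
    filter_upwards [ae_restrict_mem measurableSet_Ioc] with r hr using hC r hr
  · rw [intervalIntegral.integral_of_le ht.le, intervalIntegral.integral_of_le ht.le, ← h3]
    exact (setIntegral_congr_fun measurableSet_Ioc hC).symm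

/-- The mixed term of the functional equation. -/
noncomputable def mixW (α : ℝ) (T : ℝ → X →L[ℝ] X) (t s : ℝ) (x : X) : X :=
  ∫ σ in (0:ℝ)..t, ∫ τ in (0:ℝ)..s, (t + s - σ - τ) ^ (1 - α) • T σ (T τ x)

lemma int_mixW_left (hT : IsRLFracCosine α T) (hα : α ∈ Ioo (1:ℝ) 2) {t s : ℝ} (ht : 0 < t)
    (hs : 0 < s) (x : X) :
    IntervalIntegrable (fun r => mixW α T r s x) volume 0 t ∧
    IntegrableOn (fun p : ℝ × ℝ => (kerG α (t - p.1 + (s - p.2)) - kerG α (s - p.2)) •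
      T p.1 (T p.2 x)) (Ioc 0 t ×ˢ Ioc 0 s) ∧
    ∫ r in (0:ℝ)..t, mixW α T r s x = ∫ p in Ioc 0 t ×ˢ Ioc 0 s,
      (kerG α (t - p.1 + (s - p.2)) - kerG α (s - p.2)) • T p.1 (T p.2 x) := by
  have hms : MeasurableSet (Ioc (0:ℝ) t ×ˢ Ioc (0:ℝ) s) :=
    measurableSet_Ioc.prod measurableSet_Ioc
  obtain ⟨h1, h2, h3⟩ := truncKer_swap (γ := 1 - α) (t := t) (B := s)
    (a := fun p : ℝ × ℝ => p.1) (b := fun p => s - p.2) (by linarith [hα.2]) (by fun_prop)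
    (by fun_prop)
    (by filter_upwards [ae_restrict_mem hms] with p hp
        exact ⟨hp.1.1, hp.1.2, by linarith [hp.2.2], by linarith [hp.2.1]⟩)
    (T_joint_int hT hα ht hs x)
  simp only [sub_div] at h2 h3
  have hC : ∀ᵐ r ∂(volume.restrict (Ioc 0 t)), ∫ p in Ioc 0 t ×ˢ Ioc 0 s,
      truncKer (1 - α) p.1 (s - p.2) r • T p.1 (T p.2 x) = mixW α T r s x := by
    filter_upwards [ae_restrict_mem measurableSet_Ioc, h1.prod_right_ae] with r hr hi
    rw [mixW, ← setIntegral_ite_le hr, Measure.volume_eq_prod, setIntegral_prod _ hi]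
    refine integral_congr_ae (Eventually.of_forall fun σ => ?_)
    simp only [truncKer]
    split_ifs with h
    · rw [intervalIntegral.integral_of_le hs.le]
      refine integral_congr_ae (Eventually.of_forall fun τ => ?_)
      simp only
      congr 2; ring
    · simp
  refine ⟨?_, h2, ?_⟩
  · rw [intervalIntegrable_iff_integrableOn_Ioc_of_le ht.le]
    exact h1.integral_prod_left.congr hC
  · rw [intervalIntegral.integral_of_le ht.le]
    exact (integral_congr_ae hC).symm.trans h3

lemma int_mixW_right (hT : IsRLFracCosine α T) (hα : α ∈ Ioo (1:ℝ) 2) {t s : ℝ} (ht : 0 < t)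
    (hs : 0 < s) (x : X) :
    IntervalIntegrable (fun r => mixW α T t r x) volume 0 s ∧
    IntegrableOn (fun p : ℝ × ℝ => (kerG α (s - p.2 + (t - p.1)) - kerG α (t - p.1)) •
      T p.1 (T p.2 x)) (Ioc 0 t ×ˢ Ioc 0 s) ∧
    ∫ r in (0:ℝ)..s, mixW α T t r x = ∫ p in Ioc 0 t ×ˢ Ioc 0 s,
      (kerG α (s - p.2 + (t - p.1)) - kerG α (t - p.1)) • T p.1 (T p.2 x) := by
  have hms : MeasurableSet (Ioc (0:ℝ) t ×ˢ Ioc (0:ℝ) s) :=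
    measurableSet_Ioc.prod measurableSet_Ioc
  obtain ⟨h1, h2, h3⟩ := truncKer_swap (γ := 1 - α) (t := s) (B := t)
    (a := fun p : ℝ × ℝ => p.2) (b := fun p => t - p.1) (by linarith [hα.2]) (by fun_prop)
    (by fun_prop)
    (by filter_upwards [ae_restrict_mem hms] with p hp
        exact ⟨hp.2.1, hp.2.2, by linarith [hp.1.2], by linarith [hp.1.1]⟩)
    (T_joint_int hT hα ht hs x)
  simp only [sub_div] at h2 h3
  have hC : ∀ᵐ r ∂(volume.restrict (Ioc 0 s)), ∫ p in Ioc 0 t ×ˢ Ioc 0 s,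
      truncKer (1 - α) p.2 (t - p.1) r • T p.1 (T p.2 x) = mixW α T t r x := by
    filter_upwards [ae_restrict_mem measurableSet_Ioc, h1.prod_right_ae] with r hr hi
    rw [mixW, Measure.volume_eq_prod, setIntegral_prod _ hi,
      intervalIntegral.integral_of_le ht.le]
    refine integral_congr_ae (Eventually.of_forall fun σ => ?_)
    simp only
    rw [← setIntegral_ite_le hr]
    refine integral_congr_ae (Eventually.of_forall fun τ => ?_)
    simp only [truncKer]
    split_ifs with h
    · congr 2; ring
    · simp
  refine ⟨?_, h2, ?_⟩
  · rw [intervalIntegrable_iff_integrableOn_Ioc_of_le hs.le]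
    exact h1.integral_prod_left.congr hC
  · rw [intervalIntegral.integral_of_le hs.le]
    exact (integral_congr_ae hC).symm.trans h3

/-! ### The commutation identity -/

/-- The functional equation in terms of `primS`, `fracC` and `mixW`. -/
lemma functional_eq (hT : IsRLFracCosine α T) (hα : α ∈ Ioo (1:ℝ) 2) {t s : ℝ} (ht : 0 < t)
    (hs : 0 < s) (x : X) :
    Real.Gamma (2 - α) • primS T (t + s) x =
      fracC α T t (primS T s x) + primS T t (fracC α T s x) - mixW α T t s x := by
  rw [primS, hT.2.2 x t ht s hs, mixW]
  congr 2
  · rw [fracC]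
    refine intervalIntegral.integral_congr fun σ _ => ?_
    rw [intervalIntegral.integral_smul, (T σ).intervalIntegral_comp_comm ((primS_clm hT hα hs).1 x),
      primS]
  · rw [primS]
    refine intervalIntegral.integral_congr fun σ _ => ?_
    have e : ∀ τ, (s - τ) ^ (1 - α) • T σ (T τ x) = T σ ((s - τ) ^ (1 - α) • T τ x) :=
      fun τ => (map_smul _ _ _).symm
    simp only [e]
    rw [(T σ).intervalIntegral_comp_comm ((fracC_clm hT hα hs).1 x), fracC]

/-- Subtracting the two primitives of the mixed term cancels `G(t+s-σ-τ)` and leaves the kernel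
`G(t-σ) - G(s-τ)`, whose variables separate. -/
lemma mixW_diff (hT : IsRLFracCosine α T) (hα : α ∈ Ioo (1:ℝ) 2) {t s : ℝ} (ht : 0 < t)
    (hs : 0 < s) (x : X) :
    (∫ r in (0:ℝ)..t, mixW α T r s x) - (∫ r in (0:ℝ)..s, mixW α T t r x) =
      (∫ r in (0:ℝ)..t, fracC α T r (primS T s x)) -
        primS T t (∫ r in (0:ℝ)..s, fracC α T r x) := by
  obtain ⟨-, hl, el⟩ := int_mixW_left hT hα ht hs x
  obtain ⟨-, hr, er⟩ := int_mixW_right hT hα ht hs x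
  have hsub := hl.sub hr
  have he : ∀ p : ℝ × ℝ, (kerG α (t - p.1 + (s - p.2)) - kerG α (s - p.2)) • T p.1 (T p.2 x) -
      (kerG α (s - p.2 + (t - p.1)) - kerG α (t - p.1)) • T p.1 (T p.2 x) =
      kerG α (t - p.1) • T p.1 (T p.2 x) - T p.1 (kerG α (s - p.2) • T p.2 x) := by
    intro p
    rw [map_smul, ← sub_smul, ← sub_smul, add_comm (s - p.2)]
    congr 1; ring
  have hsub' : IntegrableOn (fun p : ℝ × ℝ => kerG α (t - p.1) • T p.1 (T p.2 x) -
      T p.1 (kerG α (s - p.2) • T p.2 x)) (Ioc 0 t ×ˢ Ioc 0 s) (volume.prod volume) := by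
    refine hsub.congr (Eventually.of_forall fun p => ?_)
    exact he p
  rw [el, er, ← integral_sub hl hr]
  simp only [he]
  obtain ⟨-, i1, e1⟩ := int_fracC hT hα ht (primS T s x)
  obtain ⟨-, i2, e2⟩ := int_fracC hT hα hs x
  rw [Measure.volume_eq_prod, setIntegral_prod _ hsub', ← intervalIntegral.integral_of_le ht.le,
    e1, e2, primS.eq_1 T t, ← intervalIntegral.integral_sub i1 ((primS_clm hT hα ht).1 _)]
  refine intervalIntegral.integral_congr fun σ _ => ?_
  simp only
  have i3 := (primS_clm hT hα hs).1 x
  have i4 : IntervalIntegrable (fun τ => kerG α (t - σ) • T σ (T τ x)) volume 0 s := by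
    have : IntervalIntegrable (fun τ => T σ (T τ x)) volume 0 s :=
      ⟨(T σ).integrable_comp i3.1, (T σ).integrable_comp i3.2⟩
    exact this.smul _
  have i5 : IntervalIntegrable (fun τ => T σ (kerG α (s - τ) • T τ x)) volume 0 s :=
      ⟨(T σ).integrable_comp i2.1, (T σ).integrable_comp i2.2⟩
  rw [← intervalIntegral.integral_of_le hs.le, intervalIntegral.integral_sub i4 i5,
    intervalIntegral.integral_smul, (T σ).intervalIntegral_comp_comm i3,
    (T σ).intervalIntegral_comp_comm i2, primS]

lemma primS2_shift (hT : IsRLFracCosine α T) (hα : α ∈ Ioo (1:ℝ) 2) {t s : ℝ} (ht : 0 < t)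
    (hs : 0 < s) (x : X) :
    IntervalIntegrable (fun r => primS T (r + s) x) volume 0 t ∧
    ∫ r in (0:ℝ)..t, primS T (r + s) x = primS2 T (t + s) x - primS2 T s x := by
  have h1 := (primS2_clm hT hα (add_pos ht hs)).1 x
  have h2 := (primS2_clm hT hα hs).1 x
  have h3 := h2.symm.trans h1
  constructor
  · have := h3.comp_add_right s
    simpa using this
  · rw [intervalIntegral.integral_comp_add_right (fun r => primS T r x), primS2, primS2, zero_add]
    exact (intervalIntegral.integral_interval_sub_left h1 h2).symm

/-- The commutation identity `(C(t) - I) S₂(s) = S₂(t) (C(s) - I)`, multiplied by `Γ(2-α)`: the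
functional equation integrated over `t`, minus the functional equation integrated over `s`. -/
lemma key_identity (hT : IsRLFracCosine α T) (hα : α ∈ Ioo (1:ℝ) 2) {t s : ℝ} (ht : 0 < t)
    (hs : 0 < s) (x : X) :
    fracC α T t (primS2 T s x) - Real.Gamma (2 - α) • primS2 T s x =
      primS2 T t (fracC α T s x) - Real.Gamma (2 - α) • primS2 T t x := by
  obtain ⟨-, LC, hLC⟩ := fracC_clm hT hα ht
  obtain ⟨-, LS, hLS⟩ := primS_clm hT hα ht
  have A : Real.Gamma (2 - α) • (primS2 T (t + s) x - primS2 T s x) =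
      (∫ r in (0:ℝ)..t, fracC α T r (primS T s x)) + primS2 T t (fracC α T s x) -
        ∫ r in (0:ℝ)..t, mixW α T r s x := by
    have i1 := (int_fracC hT hα ht (primS T s x)).1
    have i2 := (primS2_clm hT hα ht).1 (fracC α T s x)
    have i3 := (int_mixW_left hT hα ht hs x).1
    rw [← (primS2_shift hT hα ht hs x).2, primS2, ← intervalIntegral.integral_smul,
      ← intervalIntegral.integral_add i1 i2, ← intervalIntegral.integral_sub (i1.add i2) i3]
    refine intervalIntegral.integral_congr_ae (Eventually.of_forall fun r hr => ?_)
    rw [uIoc_of_le ht.le] at hr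
    exact functional_eq hT hα hr.1 hs x
  have B : Real.Gamma (2 - α) • (primS2 T (t + s) x - primS2 T t x) =
      fracC α T t (primS2 T s x) + primS T t (∫ r in (0:ℝ)..s, fracC α T r x) -
        ∫ r in (0:ℝ)..s, mixW α T t r x := by
    have j1 := (primS2_clm hT hα hs).1 x
    have j2 := (int_fracC hT hα hs x).1
    have i1 : IntervalIntegrable (fun r => LC (primS T r x)) volume 0 s :=
      ⟨LC.integrable_comp j1.1, LC.integrable_comp j1.2⟩
    have i2 : IntervalIntegrable (fun r => LS (fracC α T r x)) volume 0 s :=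
      ⟨LS.integrable_comp j2.1, LS.integrable_comp j2.2⟩
    have i3 := (int_mixW_right hT hα ht hs x).1
    rw [add_comm t s, ← (primS2_shift hT hα hs ht x).2, ← hLC, ← hLS, primS2,
      ← LC.intervalIntegral_comp_comm j1, ← LS.intervalIntegral_comp_comm j2,
      ← intervalIntegral.integral_smul,
      ← intervalIntegral.integral_add i1 i2, ← intervalIntegral.integral_sub (i1.add i2) i3]
    refine intervalIntegral.integral_congr_ae (Eventually.of_forall fun r hr => ?_)
    rw [uIoc_of_le hs.le] at hr
    rw [hLC, hLS, add_comm r t]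
    exact functional_eq hT hα ht hr.1 x
  have D := mixW_diff hT hα ht hs x
  rw [smul_sub] at A B
  linear_combination (norm := module) A - B - D

/-! ### The generator -/

lemma tendsto_primS2 (hT : IsRLFracCosine α T) (hα : α ∈ Ioo (1:ℝ) 2) (x : X) :
    Tendsto (fun t : ℝ => (Real.Gamma (α + 1) * t ^ (-α)) • primS2 T t x) (𝓝[>] 0) (𝓝 x) := by
  have h0 : Tendsto (fun t : ℝ => t ^ (-(α - 2)) • T t x) (𝓝[>] 0)
      (𝓝 ((Real.Gamma (α - 1))⁻¹ • x)) := by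
    have := hT.2.1 x
    simpa only [neg_sub] using this
  have h1 := tendsto_primitive (by linarith [hα.1]) (fun t ht => (primS_clm hT hα ht).1 x) h0
  have h2 := tendsto_primitive (by linarith [hα.1]) (fun t ht => (primS2_clm hT hα ht).1 x) h1
  have h3 := h2.const_smul (Real.Gamma (α + 1))
  have e1 : α - 2 + 1 + 1 = α := by ring
  have e2 : α - 2 + 1 = α - 1 := by ring
  have hα1 : α - 1 ≠ 0 := by linarith [hα.1]
  have hα0 : α ≠ 0 := by linarith [hα.1]
  have hG : Real.Gamma (α + 1) = α * ((α - 1) * Real.Gamma (α - 1)) := by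
    rw [Real.Gamma_add_one hα0]
    congr 1
    have := Real.Gamma_add_one hα1
    rwa [sub_add_cancel] at this
  have hg : Real.Gamma (α - 1) ≠ 0 := (Real.Gamma_pos_of_pos (by linarith [hα.1])).ne'
  have hlim : Real.Gamma (α + 1) • (α - 2 + 1 + 1)⁻¹ • (α - 2 + 1)⁻¹ • (Real.Gamma (α - 1))⁻¹ • x
      = x := by
    rw [e1, e2, hG, smul_smul, smul_smul, smul_smul]
    convert one_smul ℝ x
    field_simp
  rw [hlim, e1] at h3
  simpa only [smul_smul, primS2, primS] using h3

/-- The fractional integral in the definition of the generator is `C(t)x - x`, since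
`J_t^{2-α} (r^{α-2}/Γ(α-1)) = 1`. -/
lemma RLint_eq (hT : IsRLFracCosine α T) (hα : α ∈ Ioo (1:ℝ) 2) {t : ℝ} (ht : 0 < t) (x : X) :
    RLint (2 - α) t (fun r => T r x - (r ^ (α - 2) / Real.Gamma (α - 1)) • x) =
      (Real.Gamma (2 - α))⁻¹ • fracC α T t x - x := by
  have hg : Real.Gamma (α - 1) ≠ 0 := (Real.Gamma_pos_of_pos (by linarith [hα.1])).ne'
  have hg2 : Real.Gamma (2 - α) ≠ 0 := (Real.Gamma_pos_of_pos (by linarith [hα.2])).ne'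
  obtain ⟨b1, b2⟩ := beta_int hα ht
  have b3 := b1.div_const (Real.Gamma (α - 1))
  have b4 : IntervalIntegrable (fun σ : ℝ =>
      ((t - σ) ^ (1 - α) * σ ^ (α - 2) / Real.Gamma (α - 1)) • x) volume 0 t :=
    ⟨b3.1.smul_const x, b3.2.smul_const x⟩
  have e : ∀ σ : ℝ, (t - σ) ^ (2 - α - 1) • (T σ x - (σ ^ (α - 2) / Real.Gamma (α - 1)) • x) =
      (t - σ) ^ (1 - α) • T σ x - ((t - σ) ^ (1 - α) * σ ^ (α - 2) / Real.Gamma (α - 1)) • x := by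
    intro σ
    rw [smul_sub, smul_smul, show 2 - α - 1 = 1 - α by ring, mul_div_assoc]
  rw [RLint]
  simp only [e]
  rw [intervalIntegral.integral_sub ((fracC_clm hT hα ht).1 x) b4,
    intervalIntegral.integral_smul_const, intervalIntegral.integral_div, b2, smul_sub, smul_smul,
    fracC]
  congr 1
  convert one_smul ℝ x
  field_simp

lemma genLimit_iff (hT : IsRLFracCosine α T) (hα : α ∈ Ioo (1:ℝ) 2) (x y : X) :
    GenLimit α T x y ↔ Tendsto (fun t : ℝ => (Real.Gamma (α + 1) * t ^ (-α)) •
      ((Real.Gamma (2 - α))⁻¹ • fracC α T t x - x)) (𝓝[>] (0:ℝ)) (𝓝 y) := by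
  rw [GenLimit]
  refine tendsto_congr' ?_
  filter_upwards [self_mem_nhdsWithin] with t ht
  rw [RLint_eq hT hα ht]

lemma key_identity' (hT : IsRLFracCosine α T) (hα : α ∈ Ioo (1:ℝ) 2) {t s : ℝ} (ht : 0 < t)
    (hs : 0 < s) (x : X) :
    (Real.Gamma (2 - α))⁻¹ • fracC α T t (primS2 T s x) - primS2 T s x =
      primS2 T t ((Real.Gamma (2 - α))⁻¹ • fracC α T s x - x) := by
  have hg2 : Real.Gamma (2 - α) ≠ 0 := (Real.Gamma_pos_of_pos (by linarith [hα.2])).ne'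
  obtain ⟨-, L, hL⟩ := primS2_clm hT hα ht
  have h := congrArg (fun z => (Real.Gamma (2 - α))⁻¹ • z) (key_identity hT hα ht hs x)
  simp only [smul_sub, inv_smul_smul₀ hg2] at h
  rw [h, ← hL, ← hL, ← hL, map_sub, map_smul]

/-- The graph of the generator is cut out by the equations `C(t)x - x = S₂(t)y`, `t > 0`: apply the
commutation identity to `x`, multiply by `Γ(α+1) s^{-α}` and let `s → 0+`. -/
lemma genLimit_iff_forall (hT : IsRLFracCosine α T) (hα : α ∈ Ioo (1:ℝ) 2) (x y : X) :
    GenLimit α T x y ↔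
      ∀ t > 0, (Real.Gamma (2 - α))⁻¹ • fracC α T t x - x = primS2 T t y := by
  rw [genLimit_iff hT hα]
  constructor
  · intro h t ht
    obtain ⟨-, L, hL⟩ := primS2_clm hT hα ht
    obtain ⟨-, K, hK⟩ := fracC_clm hT hα ht
    have h1 := (L.continuous.tendsto y).comp h
    have h2 := (((Real.Gamma (2 - α))⁻¹ • K - ContinuousLinearMap.id ℝ X).continuous.tendsto x).comp
      (tendsto_primS2 hT hα x)
    rw [← hK, ← hL]
    refine tendsto_nhds_unique h2 (h1.congr' ?_)
    filter_upwards [self_mem_nhdsWithin] with s hs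
    simp only [Function.comp, map_smul]
    congr 1
    rw [hL, ← key_identity' hT hα ht hs x, ← hK]
    rfl
  · intro h
    refine (tendsto_primS2 hT hα y).congr' ?_
    filter_upwards [self_mem_nhdsWithin] with t ht
    rw [h t ht]

end cosine

/-- The generator `A` of a Riemann-Liouville `α`-order fractional cosine function is a
closed linear operator (its graph is a closed linear subspace) with dense domain. -/
theorem rl_frac_cosine_generator_closed_densely_defined
    {X : Type*} [NormedAddCommGroup X] [NormedSpace ℝ X] [CompleteSpace X]
    (α : ℝ) (hα : α ∈ Set.Ioo (1:ℝ) 2) (T : ℝ → X →L[ℝ] X)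
    (hT : IsRLFracCosine α T) :
    (∀ (x y x' y' : X) (c : ℝ), GenLimit α T x y → GenLimit α T x' y' →
      GenLimit α T (x + x') (y + y') ∧ GenLimit α T (c • x) (c • y)) ∧
    IsClosed {p : X × X | GenLimit α T p.1 p.2} ∧
    Dense {x : X | ∃ y, GenLimit α T x y} := by
  refine ⟨?_, ?_, ?_⟩
  · intro x y x' y' c h h'
    rw [genLimit_iff_forall hT hα] at h h' ⊢
    rw [genLimit_iff_forall hT hα]
    refine ⟨fun t ht => ?_, fun t ht => ?_⟩
    all_goals
      obtain ⟨-, L, hL⟩ := primS2_clm hT hα ht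
      obtain ⟨-, K, hK⟩ := fracC_clm hT hα ht
      have e := h t ht
      have e' := h' t ht
      rw [← hK, ← hL] at e e' ⊢
    · rw [map_add, map_add, ← e, ← e', smul_add]; abel
    · rw [map_smul, map_smul, ← e, smul_sub, smul_comm]
  · simp only [genLimit_iff_forall hT hα, ofPred_forall]
    refine isClosed_iInter fun t => isClosed_iInter fun ht => ?_
    obtain ⟨-, L, hL⟩ := primS2_clm hT hα ht
    obtain ⟨-, K, hK⟩ := fracC_clm hT hα ht
    simp only [← hL, ← hK]
    exact isClosed_eq (by fun_prop) (by fun_prop)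
  · intro x
    refine mem_closure_of_tendsto (tendsto_primS2 hT hα x) ?_
    filter_upwards [self_mem_nhdsWithin] with s hs
    -- the vector `c • S₂(s) x` equals `S₂(s) (c • x)`, so it is enough to treat `S₂(s) z`
    obtain ⟨-, L, hL⟩ := primS2_clm hT hα hs
    rw [← hL, ← map_smul, hL]
    set z := (Real.Gamma (α + 1) * s ^ (-α)) • x
    refine ⟨(Real.Gamma (2 - α))⁻¹ • fracC α T s z - z, ?_⟩
    rw [genLimit_iff_forall hT hα]
    exact fun t ht => key_identity' hT hα ht hs z
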